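/- arXiv:1005.4277 — 2 statements merged into one kernel-verified Lean document; each statement's English description precedes it below -/
import Mathlib

section
/- For all complex numbers a, b, every integer c with 0 ≤ c ≤ n−1, and either (consistent) choice of sign ±, the following identity holds: Σ_{s=0}^{c} ξ^{±(a+b−c+2)s} · [a−s¦a−c] · [b+s¦b] = ξ^{±(b+1)c} · [a+b+1¦a+b−c+1]. -/
open Complex Finset Filter
open scoped Matrix Kronecker Real

noncomputable section

/-- `ξ^a = exp(π √-1 a / n)` for the `2n`-th root of unity `ξ = exp(π √-1/n)`. -/
def xic (n : ℕ) (a : ℂ) : ℂ := Complex.exp (Real.pi * Complex.I * a / n)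

/-- `{a} = ξ^a - ξ^{-a}`. -/
def qn (n : ℕ) (a : ℂ) : ℂ := xic n a - xic n (-a)

/-- `{k}! = {1}{2}⋯{k}`. -/
def qfac (n : ℕ) (k : ℕ) : ℂ := ∏ j ∈ Finset.range k, qn n ((j : ℂ) + 1)

-- The quantum binomial `[a¦b]`, defined (and nonzero) only when `a - b ∈ {0,1,…,n-1}`.
open Classical in
def qbin (n : ℕ) (a b : ℂ) : ℂ :=
  if h : ∃ k : ℕ, k < n ∧ a - b = (k : ℂ) then
    ∏ j ∈ Finset.range h.choose, qn n (a - (j : ℂ)) / qn n (a - b - (j : ℂ))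
  else 0

/-- `[a] = {a}/{1}`. -/
def qint (n : ℕ) (a : ℂ) : ℂ := qn n a / qn n 1

/-- `a` is not a half-integer. -/
def NotHalfInt (a : ℂ) : Prop := ∀ m : ℤ, a ≠ (m : ℂ) / 2

/-- `x ∈ {0, 1, …, n-1}` (as a complex number). -/
def InZn (n : ℕ) (x : ℂ) : Prop := ∃ k : ℕ, k < n ∧ x = (k : ℂ)

/-- The matrix of `E` on `V^a = ℂ^n`: `E e_j = [j] e_{j-1}` (independent of `a`). -/
def Emat (n : ℕ) : Matrix (Fin n) (Fin n) ℂ :=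
  Matrix.of fun i j => if (j : ℕ) = (i : ℕ) + 1 then qint n ((j : ℕ) : ℂ) else 0

/-- The matrix of `F` on `V^a`: `F e_j = [2a-j] e_{j+1}` (with `e_n = 0`). -/
def Fmat (n : ℕ) (a : ℂ) : Matrix (Fin n) (Fin n) ℂ :=
  Matrix.of fun i j => if (i : ℕ) = (j : ℕ) + 1 then qint n (2 * a - ((j : ℕ) : ℂ)) else 0

/-- The matrix of `K` on `V^a`: `K e_j = ξ^{a-j} e_j`. -/
def Kmat (n : ℕ) (a : ℂ) : Matrix (Fin n) (Fin n) ℂ :=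
  Matrix.of fun i j => if i = j then xic n (a - ((i : ℕ) : ℂ)) else 0

/-- The matrix of `K⁻¹` on `V^a`. -/
def Kinvmat (n : ℕ) (a : ℂ) : Matrix (Fin n) (Fin n) ℂ :=
  Matrix.of fun i j => if i = j then xic n (-(a - ((i : ℕ) : ℂ))) else 0

/-- The `R`-matrix `R_{a,b} : V^a ⊗ V^b → V^b ⊗ V^a`:
`R(e_u ⊗ e_v) = Σ_m {m}! ξ^{2(a-u)(b-v) - m(a-b-u+v) - m(m+1)/2} [u¦u-m] [2b-v¦2b-v-m]
e_{v+m} ⊗ e_{u-m}`; the entry at row `(h,k)`, column `(u,v)` is the coefficient of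
`e_h ⊗ e_k`, nonzero only when `h + k = u + v` and `h ≥ v` (with `m = h - v`). -/
def Rmat (n : ℕ) (a b : ℂ) : Matrix (Fin n × Fin n) (Fin n × Fin n) ℂ :=
  Matrix.of fun p q =>
    if ((p.1 : ℕ) + (p.2 : ℕ) = (q.1 : ℕ) + (q.2 : ℕ)) ∧ ((q.2 : ℕ) ≤ (p.1 : ℕ)) then
      (fun m : ℕ =>
        qfac n m *
        xic n (2 * (a - ((q.1 : ℕ) : ℂ)) * (b - ((q.2 : ℕ) : ℂ))
            - (m : ℂ) * (a - b - ((q.1 : ℕ) : ℂ) + ((q.2 : ℕ) : ℂ))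
            - (m : ℂ) * ((m : ℂ) + 1) / 2) *
        qbin n ((q.1 : ℕ) : ℂ) (((q.1 : ℕ) : ℂ) - (m : ℂ)) *
        qbin n (2 * b - ((q.2 : ℕ) : ℂ)) (2 * b - ((q.2 : ℕ) : ℂ) - (m : ℂ)))
      ((p.1 : ℕ) - (q.2 : ℕ))
    else 0

/-- The Clebsch-Gordan quantum coefficient `C^{a,b,c}_{u,v,t}`. -/
def CG (n : ℕ) (a b c : ℂ) (u v t : ℕ) : ℂ :=
  Complex.exp (Real.pi * Complex.I * (c - a - b) / 2) *
  (-1 : ℂ) ^ ((v : ℤ) - (t : ℤ)) *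
  xic n (((v : ℂ) * (2 * b - (v : ℂ) + 1) - (u : ℂ) * (2 * a - (u : ℂ) + 1)) / 2) *
  (qbin n (2 * c) (2 * c - (t : ℂ)))⁻¹ *
  qbin n (2 * c) (a + b + c - ((n : ℂ) - 1)) *
  ∑ z ∈ Finset.range (t + 1),
    (-1 : ℂ) ^ z * xic n ((2 * (z : ℂ) - (t : ℂ)) * (2 * c - (t : ℂ) + 1) / 2) *
    qbin n (a + b - c) ((u : ℂ) - (z : ℂ)) *
    qbin n (2 * a - (u : ℂ) + (z : ℂ)) (2 * a - (u : ℂ)) *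
    qbin n (2 * b - (v : ℂ) + ((t : ℂ) - (z : ℂ))) (2 * b - (v : ℂ))

-- The inclusion `Y_c^{a,b} : V^c → V^a ⊗ V^b`.
open Classical in
def Yinc (n : ℕ) (a b c : ℂ) : Matrix (Fin n × Fin n) (Fin n) ℂ :=
  Matrix.of fun p t =>
    if ((p.1 : ℕ) : ℂ) + ((p.2 : ℕ) : ℂ) - ((t : ℕ) : ℂ) = a + b - c then
      CG n a b c (p.1 : ℕ) (p.2 : ℕ) (t : ℕ)
    else 0

-- The projection `Y_{a,b}^c : V^a ⊗ V^b → V^c`.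
open Classical in
def Yproj (n : ℕ) (a b c : ℂ) : Matrix (Fin n) (Fin n × Fin n) ℂ :=
  Matrix.of fun t p =>
    if ((p.1 : ℕ) : ℂ) + ((p.2 : ℕ) : ℂ) - ((t : ℕ) : ℂ) = a + b - c then
      CG n ((n : ℂ) - 1 - b) ((n : ℂ) - 1 - a) ((n : ℂ) - 1 - c)
        (n - 1 - (p.2 : ℕ)) (n - 1 - (p.1 : ℕ)) (n - 1 - (t : ℕ))
    else 0

-- Extracts the natural number `k` with `x = k` (0 if there is none).
open Classical in
def natIdx (x : ℂ) : ℕ := if h : ∃ k : ℕ, x = (k : ℂ) then h.choose else 0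

/-- The `SL(2,ℂ)` quantum 6j-symbol `{a b e; d c f}_ξ`. -/
def sixj (n : ℕ) (a b e d c f : ℂ) : ℂ :=
  (-1 : ℂ) ^ (n - 1 + natIdx (a + f - c)) *
  (qbin n (2 * f + (n : ℂ)) (2 * f + 1))⁻¹ *
  (qfac n (natIdx (d + e - c)) * qfac n (natIdx (a + b - e)) /
    (qfac n (natIdx (b + d - f)) * qfac n (natIdx (a + f - c)))) *
  qbin n (2 * e) (a + b + e + 1 - (n : ℂ)) *
  (qbin n (2 * e) (e + c - d))⁻¹ *
  ∑ z ∈ Finset.Icc (natIdx (d + e - c) - natIdx (b + d - f))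
      (min (natIdx (d + e - c)) (natIdx (a + f - c))),
    (-1 : ℂ) ^ z * qbin n (a + f + c + 1) (2 * c + (z : ℂ) + 1) *
    qbin n ((a + c - f) + (z : ℂ)) (a + c - f) *
    qbin n ((b + f - d) + (d + e - c) - (z : ℂ)) (b + f - d) *
    qbin n ((d + c - e) + (z : ℂ)) (d + f - b)

/-- The tetrahedral symbol `{a b e; d c f}_tet = {a b e; d c f}_ξ · [2f+n¦2f+1]`. -/
def sixjtet (n : ℕ) (a b e d c f : ℂ) : ℂ :=
  sixj n a b e d c f * qbin n (2 * f + (n : ℂ)) (2 * f + 1)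

/-- The Lobachevsky function `Λ(x) = -∫_0^x log|2 sin t| dt`. -/
def lob (x : ℝ) : ℝ := -∫ t in (0 : ℝ)..x, Real.log |2 * Real.sin t|

/-- A triple of integers is admissible. -/
def Admissible (n : ℕ) (i j k : ℤ) : Prop :=
  0 < i ∧ 0 < j ∧ 0 < k ∧ i < (n : ℤ) - 1 ∧ j < (n : ℤ) - 1 ∧ k < (n : ℤ) - 1 ∧
  (n : ℤ) - 1 < i + j + k ∧ i + j + k < 2 * ((n : ℤ) - 1) ∧
  0 < i + j - k ∧ 0 < j + k - i ∧ 0 < k + i - j ∧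
  i + j - k < (n : ℤ) - 1 ∧ j + k - i < (n : ℤ) - 1 ∧ k + i - j < (n : ℤ) - 1

/-!
The identity is the balanced `q`-Chu–Vandermonde convolution. With `⟨u⟩ = u - u⁻¹` and
`B_k(x) = ∏_{j=1}^k ⟨x q^j⟩ / ⟨q^j⟩`, multiply the sum over `i + j = c + 1` by
`⟨q^(c+1)⟩ = q^i ⟨q^j⟩ + q^(-j) ⟨q^i⟩`. Each half absorbs its bracket by
`⟨q^(k+1)⟩ B_{k+1}(x) = ⟨x q⟩ B_k(x q)` and becomes the sum for `c`, with `x` resp. `y` replaced by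
`x q` resp. `y q`. Both signs of the exponent come from the same identity, since `B_k` is unchanged
when `q` and `x` are both inverted.
-/

section Bracket

variable {R : Type*} [CommRing R]

/-- The quantum bracket `⟨u⟩ = u - u⁻¹` of a unit; `{a}` is `⟨ξ^a⟩`. -/
def qBracket (u : Rˣ) : R := u - (u⁻¹ : Rˣ)

lemma qBracket_one : qBracket (1 : Rˣ) = 0 := by simp [qBracket]

lemma qBracket_inv (u : Rˣ) : qBracket u⁻¹ = -qBracket u := by simp [qBracket]

lemma qBracket_mul (u v : Rˣ) :
    qBracket (u * v) = v * qBracket u + (u⁻¹ : Rˣ) * qBracket v := by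
  simp only [qBracket, mul_inv, Units.val_mul]
  ring

lemma mul_qBracket_mul (u v : Rˣ) :
    v * qBracket (u * v) = qBracket u + u * v * qBracket v := by
  simp only [qBracket, mul_inv, Units.val_mul]
  linear_combination (u - ((u⁻¹ : Rˣ) : R)) * v.mul_inv

lemma qBracket_eq_zero_iff {u : Rˣ} : qBracket u = 0 ↔ (u : R) ^ 2 = 1 := by
  rw [qBracket, sub_eq_zero, Units.val_inj, eq_inv_iff_mul_eq_one, ← sq, Units.ext_iff,
    Units.val_pow_eq_pow_val, Units.val_one]

end Bracket

section Convolution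

variable {K : Type*} [Field K]

/-- The balanced `q`-binomial `[β+k¦β]`, as a function of `x = q^β` and the difference `k` of its
two arguments. -/
def balancedQBinom (q x : Kˣ) (k : ℕ) : K :=
  ∏ j ∈ range k, qBracket (x * q ^ (j + 1)) / qBracket (q ^ (j + 1))

lemma balancedQBinom_inv (q x : Kˣ) (k : ℕ) :
    balancedQBinom q⁻¹ x⁻¹ k = balancedQBinom q x k := by
  simp only [balancedQBinom, inv_pow, ← mul_inv, qBracket_inv, neg_div_neg_eq]

lemma qBracket_pow_mul_balancedQBinom_succ {q : Kˣ} {k : ℕ} (hk : qBracket (q ^ (k + 1)) ≠ 0)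
    (x : Kˣ) :
    qBracket (q ^ (k + 1)) * balancedQBinom q x (k + 1)
      = qBracket (x * q) * balancedQBinom q (x * q) k := by
  have hshift (j : ℕ) : x * q ^ (j + 1 + 1) = x * q * q ^ (j + 1) := by
    rw [mul_assoc, ← pow_succ']
  simp only [balancedQBinom, prod_div_distrib]
  rw [prod_range_succ', prod_range_succ (fun j => qBracket (q ^ (j + 1))), zero_add, pow_one,
    prod_congr rfl fun j _ => congrArg qBracket (hshift j)]
  field_simp

/-- The `q`-Vandermonde sum of order `c`, for quantum binomials with lower arguments given by
`x` and `y`. -/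
def qVandermondeSum (q x y : Kˣ) (c : ℕ) : K :=
  ∑ p ∈ antidiagonal c,
    ((x * y * q ^ 2 : Kˣ) : K) ^ p.1 * balancedQBinom q x p.2 * balancedQBinom q y p.1

lemma sum_qBracket_snd_mul {q : Kˣ} {c : ℕ} (hq : ∀ k < c + 1, qBracket (q ^ (k + 1)) ≠ 0)
    (x y : Kˣ) :
    ∑ p ∈ antidiagonal (c + 1), ((x * y * q ^ 2 : Kˣ) : K) ^ p.1 * q ^ p.1 *
        (qBracket (q ^ p.2) * balancedQBinom q x p.2) * balancedQBinom q y p.1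
      = qBracket (x * q) * qVandermondeSum q (x * q) y c := by
  rw [qVandermondeSum, Nat.sum_antidiagonal_succ', mul_sum]
  simp only [pow_zero, qBracket_one, zero_mul, mul_zero, zero_add]
  refine sum_congr rfl fun p hp => ?_
  have hp : p.1 + p.2 = c := mem_antidiagonal.1 hp
  rw [qBracket_pow_mul_balancedQBinom_succ (hq p.2 (by omega))]
  push_cast
  ring

lemma sum_qBracket_fst_mul {q : Kˣ} {c : ℕ} (hq : ∀ k < c + 1, qBracket (q ^ (k + 1)) ≠ 0)
    (x y : Kˣ) :
    ∑ p ∈ antidiagonal (c + 1), ((x * y * q ^ 2 : Kˣ) : K) ^ p.1 * ((q ^ p.2)⁻¹ : Kˣ) *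
        balancedQBinom q x p.2 * (qBracket (q ^ p.1) * balancedQBinom q y p.1)
      = x * y * q ^ 2 * ((q ^ c)⁻¹ : Kˣ) * qBracket (y * q) * qVandermondeSum q x (y * q) c := by
  rw [qVandermondeSum, Nat.sum_antidiagonal_succ, mul_sum]
  simp only [pow_zero, qBracket_one, zero_mul, mul_zero, zero_add]
  refine sum_congr rfl fun p hp => ?_
  have hp : p.1 + p.2 = c := mem_antidiagonal.1 hp
  have hinv : (((q ^ p.2)⁻¹ : Kˣ) : K) = ((q ^ c)⁻¹ : Kˣ) * q ^ p.1 := by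
    rw [← Units.val_pow_eq_pow_val, ← Units.val_mul, ← hp, pow_add, mul_inv, mul_right_comm,
      inv_mul_cancel, one_mul]
  rw [qBracket_pow_mul_balancedQBinom_succ (hq p.1 (by omega)), hinv]
  push_cast
  ring

lemma qBracket_pow_mul_qVandermondeSum_succ {q : Kˣ} {c : ℕ}
    (hq : ∀ k < c + 1, qBracket (q ^ (k + 1)) ≠ 0) (x y : Kˣ) :
    qBracket (q ^ (c + 1)) * qVandermondeSum q x y (c + 1)
      = qBracket (x * q) * qVandermondeSum q (x * q) y c
        + x * y * q ^ 2 * ((q ^ c)⁻¹ : Kˣ) * qBracket (y * q) * qVandermondeSum q x (y * q) c := by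
  rw [← sum_qBracket_snd_mul hq, ← sum_qBracket_fst_mul hq, ← sum_add_distrib, qVandermondeSum,
    mul_sum]
  refine sum_congr rfl fun p hp => ?_
  rw [← mem_antidiagonal.1 hp, add_comm p.1, pow_add, qBracket_mul, Units.val_pow_eq_pow_val]
  ring

theorem binomial_summation_identity_general (q : Kˣ) (c : ℕ)
    (hq : ∀ k < c, qBracket (q ^ (k + 1)) ≠ 0) (x y : Kˣ) :
    qVandermondeSum q x y c = ((y * q : Kˣ) : K) ^ c * balancedQBinom q (x * y * q) c := by
  induction c generalizing x y with
  | zero => simp [qVandermondeSum, balancedQBinom]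
  | succ c ih =>
    have hq' : ∀ k < c, qBracket (q ^ (k + 1)) ≠ 0 := fun k hk => hq k (by omega)
    have hc : qBracket (q ^ (c + 1)) ≠ 0 := hq c (by omega)
    have hpow : ((q ^ c)⁻¹ : Kˣ) * ((y * q * q : Kˣ) : K) ^ c = ((y * q : Kˣ) : K) ^ c := by
      rw [← Units.val_pow_eq_pow_val, ← Units.val_mul, mul_pow _ q, mul_comm, mul_inv_cancel_right,
        Units.val_pow_eq_pow_val]
    have hx : x * q * y * q = x * q * (y * q) := mul_assoc _ _ _
    have hy : x * (y * q) * q = x * q * (y * q) := mul_right_comm _ _ _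
    have hxy : x * y * q * q = x * q * (y * q) := by rw [mul_mul_mul_comm, mul_assoc]
    refine mul_left_cancel₀ hc ?_
    calc qBracket (q ^ (c + 1)) * qVandermondeSum q x y (c + 1)
        = (qBracket (x * q) + (x * q : Kˣ) * (y * q : Kˣ) * qBracket (y * q)) *
            ((y * q : Kˣ) : K) ^ c * balancedQBinom q (x * q * (y * q)) c := by
          rw [qBracket_pow_mul_qVandermondeSum_succ hq, ih hq', ih hq', hx, hy]
          simp only [Units.val_mul] at hpow ⊢
          linear_combination (x * y * q ^ 2 * qBracket (y * q) *
            balancedQBinom q (x * q * (y * q)) c) * hpow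
      _ = ((y * q : Kˣ) : K) ^ (c + 1) *
            (qBracket (x * q * (y * q)) * balancedQBinom q (x * q * (y * q)) c) := by
          rw [← mul_qBracket_mul]
          ring
      _ = qBracket (q ^ (c + 1)) *
            (((y * q : Kˣ) : K) ^ (c + 1) * balancedQBinom q (x * y * q) (c + 1)) := by
          rw [mul_left_comm (qBracket (q ^ (c + 1))),
            qBracket_pow_mul_balancedQBinom_succ hc, hxy]

end Convolution

section RootOfUnity

/-- `a ↦ ξ^a` as a character of `ℂ` with values in the units. -/
def xicChar (n : ℕ) : AddChar ℂ ℂˣ where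
  toFun a := Units.mk0 (xic n a) (exp_ne_zero _)
  map_zero_eq_one' := by ext; simp [xic]
  map_add_eq_mul' a b := by
    ext
    simp only [xic, Units.val_mk0, Units.val_mul, ← exp_add]
    ring_nf

lemma coe_xicChar (n : ℕ) (a : ℂ) : (xicChar n a : ℂ) = xic n a := rfl

lemma coe_xicChar_pow (n : ℕ) (a : ℂ) (k : ℕ) : (xicChar n a : ℂ) ^ k = xic n (a * k) := by
  rw [← Units.val_pow_eq_pow_val, ← AddChar.map_nsmul_eq_pow, nsmul_eq_mul, mul_comm, coe_xicChar]

lemma qn_eq_qBracket (n : ℕ) (a : ℂ) : qn n a = qBracket (xicChar n a) := by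
  rw [qn, qBracket, ← AddChar.map_neg_eq_inv, coe_xicChar, coe_xicChar]

lemma isPrimitiveRoot_xic_two {n : ℕ} (hn : n ≠ 0) : IsPrimitiveRoot (xic n 2) n := by
  convert isPrimitiveRoot_exp n hn using 1
  rw [xic]
  ring_nf

lemma qBracket_xicChar_pow_ne_zero {n k : ℕ} (hk : k + 1 < n) {ε : ℂ} (hε : ε = 1 ∨ ε = -1) :
    qBracket (xicChar n ε ^ (k + 1)) ≠ 0 := by
  have hone : qBracket (xicChar n 1 ^ (k + 1)) ≠ 0 := by
    rw [Ne, qBracket_eq_zero_iff, Units.val_pow_eq_pow_val, pow_right_comm, coe_xicChar_pow,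
      one_mul, Nat.cast_ofNat]
    exact (isPrimitiveRoot_xic_two (by omega)).pow_ne_one_of_pos_of_lt k.succ_ne_zero hk
  rcases hε with rfl | rfl
  · exact hone
  · rwa [AddChar.map_neg_eq_inv, inv_pow, qBracket_inv, neg_ne_zero]

lemma qbin_add_natCast {n k : ℕ} (hk : k < n) (b : ℂ) :
    qbin n (b + k) b = ∏ j ∈ range k, qn n (b + k - j) / qn n (k - j) := by
  have hex : ∃ k' : ℕ, k' < n ∧ b + k - b = k' := ⟨k, hk, add_sub_cancel_left b k⟩
  have hchoose : hex.choose = k :=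
    Nat.cast_injective (hex.choose_spec.2.symm.trans (add_sub_cancel_left b k))
  rw [qbin, dif_pos hex, hchoose, add_sub_cancel_left]

lemma qbin_add_natCast_eq_balancedQBinom {n k : ℕ} (hk : k < n) (b : ℂ) :
    qbin n (b + k) b = balancedQBinom (xicChar n 1) (xicChar n b) k := by
  have hpow (j : ℕ) : xicChar n 1 ^ j = xicChar n j := by
    rw [← AddChar.map_nsmul_eq_pow, nsmul_one]
  rw [qbin_add_natCast hk, balancedQBinom, ← prod_range_reflect]
  refine prod_congr rfl fun j hj => ?_
  have hcast : (k : ℂ) - (k - 1 - j : ℕ) = (j + 1 : ℕ) := by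
    rw [sub_eq_iff_eq_add]
    norm_cast
    have := mem_range.1 hj
    omega
  rw [add_sub_assoc, hcast, hpow, ← AddChar.map_add_eq_mul, qn_eq_qBracket, qn_eq_qBracket]

lemma qbin_eq_balancedQBinom {n k : ℕ} (hk : k < n) {a b : ℂ} (h : a = b + k) {ε : ℂ}
    (hε : ε = 1 ∨ ε = -1) :
    qbin n a b = balancedQBinom (xicChar n ε) (xicChar n (ε * b)) k := by
  rw [h, qbin_add_natCast_eq_balancedQBinom hk]
  rcases hε with rfl | rfl
  · rw [one_mul]
  · rw [neg_one_mul, AddChar.map_neg_eq_inv, AddChar.map_neg_eq_inv, balancedQBinom_inv]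

lemma sum_range_qbin_eq_qVandermondeSum {n c : ℕ} (hc : c < n) (a b : ℂ) {ε : ℂ}
    (hε : ε = 1 ∨ ε = -1) :
    ∑ s ∈ range (c + 1), xic n (ε * (a + b - c + 2) * s) * qbin n (a - s) (a - c) *
        qbin n (b + s) b
      = qVandermondeSum (xicChar n ε) (xicChar n (ε * (a - c))) (xicChar n (ε * b)) c := by
  have hweight : xicChar n (ε * (a - c)) * xicChar n (ε * b) * xicChar n ε ^ 2
      = xicChar n (ε * (a + b - c + 2)) := by
    rw [sq, ← AddChar.map_add_eq_mul, ← AddChar.map_add_eq_mul, ← AddChar.map_add_eq_mul]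
    ring_nf
  rw [qVandermondeSum, Nat.sum_antidiagonal_eq_sum_range_succ_mk]
  refine sum_congr rfl fun s hs => ?_
  have hsc : s ≤ c := mem_range_succ_iff.1 hs
  rw [hweight, coe_xicChar_pow, qbin_eq_balancedQBinom (show s < n by omega) rfl hε,
    qbin_eq_balancedQBinom (show c - s < n by omega) (by push_cast [hsc]; ring) hε]

lemma pow_mul_balancedQBinom_xicChar {n c : ℕ} (hc : c < n) (a b : ℂ) {ε : ℂ}
    (hε : ε = 1 ∨ ε = -1) :
    ((xicChar n (ε * b) * xicChar n ε : ℂˣ) : ℂ) ^ c *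
        balancedQBinom (xicChar n ε) (xicChar n (ε * (a - c)) * xicChar n (ε * b) * xicChar n ε) c
      = xic n (ε * (b + 1) * c) * qbin n (a + b + 1) (a + b - c + 1) := by
  have hbase : xicChar n (ε * b) * xicChar n ε = xicChar n (ε * (b + 1)) := by
    rw [← AddChar.map_add_eq_mul, mul_add_one]
  have hlower : xicChar n (ε * (a - c)) * xicChar n (ε * b) * xicChar n ε
      = xicChar n (ε * (a + b - c + 1)) := by
    rw [← AddChar.map_add_eq_mul, ← AddChar.map_add_eq_mul]
    ring_nf
  rw [hbase, hlower, coe_xicChar_pow,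
    qbin_eq_balancedQBinom hc (show a + b + 1 = a + b - c + 1 + c by ring) hε]

end RootOfUnity

theorem binomial_summation_identity (n : ℕ) (hn : 2 ≤ n) (a b : ℂ) (c : ℕ)
    (hc : c ≤ n - 1) (ε : ℂ) (hε : ε = 1 ∨ ε = -1) :
    ∑ s ∈ Finset.range (c + 1),
        xic n (ε * (a + b - (c : ℂ) + 2) * (s : ℂ)) *
          qbin n (a - (s : ℂ)) (a - (c : ℂ)) * qbin n (b + (s : ℂ)) b
      = xic n (ε * (b + 1) * (c : ℂ)) * qbin n (a + b + 1) (a + b - (c : ℂ) + 1) := by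
  have hcn : c < n := by omega
  rw [sum_range_qbin_eq_qVandermondeSum hcn a b hε,
    binomial_summation_identity_general _ c
      fun _ hk => qBracket_xicChar_pow_ne_zero (by omega) hε,
    pow_mul_balancedQBinom_xicChar hcn a b hε]

end
end

section
/- For all a, b ∈ ℂ \ (1/2)ℤ, the R-matrix map R_{a,b} : V^a ⊗ V^b → V^b ⊗ V^a intertwines the coproduct actions: R_{a,b} ∘ (E_a ⊗ K_b + K_a^{−1} ⊗ E_b) = (E_b ⊗ K_a + K_b^{−1} ⊗ E_a) ∘ R_{a,b}, R_{a,b} ∘ (F_a ⊗ K_b + K_a^{−1} ⊗ F_b) = (F_b ⊗ K_a + K_b^{−1} ⊗ F_a) ∘ R_{a,b}, and R_{a,b} ∘ (K_a ⊗ K_b) = (K_b ⊗ K_a) ∘ R_{a,b}. -/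
open Complex Finset Filter
open scoped Matrix Kronecker Real

noncomputable section

/-!
Up to the flip of the two tensor factors, the `R`-matrix factors as `H * Θ`, where `H` is the
diagonal Cartan factor and `Θ = ∑ c_m Z^m` is the quasi-`R`-matrix in `Z = E K ⊗ K⁻¹ F`. With
`U = K⁻¹ ⊗ E`, `X = E ⊗ K` and `Y = E ⊗ K⁻³` one has `[U, Z] = (X - Y) / {1}`, while `X` and `Y`
commute with `Z` up to powers of `ξ`; hence `c_(m+1) [U, Z^(m+1)] = c_m (Z^m X - Y Z^m)`, and the
sum telescopes to `Θ (X + U) = (U + Y) Θ` because `(E K)^n = 0`. Conjugation by `H` turns `U + Y`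
into the flipped coproduct of `E`. The relation for `F` is the one for `E` seen through the
Chevalley involution and the flip, and the one for `K` holds because `Z` has weight zero.
-/

section Kronecker

theorem kronecker_pow {ι κ : Type*} [Fintype ι] [DecidableEq ι] [Fintype κ] [DecidableEq κ]
    {R : Type*} [CommSemiring R] (A : Matrix ι ι R) (B : Matrix κ κ R) (m : ℕ) :
    (A ⊗ₖ B) ^ m = (A ^ m) ⊗ₖ (B ^ m) := by
  induction m with
  | zero => simp only [pow_zero, Matrix.one_kronecker_one]
  | succ m ih => rw [pow_succ, pow_succ, pow_succ, ih, ← Matrix.mul_kronecker_mul]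

theorem kronecker_sub {l m p r R : Type*} [NonUnitalNonAssocRing R] (A : Matrix l m R)
    (B C : Matrix p r R) : A ⊗ₖ (B - C) = A ⊗ₖ B - A ⊗ₖ C :=
  Matrix.ext fun _ _ => mul_sub _ _ _

theorem kronecker_submatrix_swap {l m p r R : Type*} [CommMagma R] (A : Matrix l m R)
    (B : Matrix p r R) : (A ⊗ₖ B).submatrix Prod.swap Prod.swap = B ⊗ₖ A :=
  Matrix.ext fun _ _ => mul_comm _ _

theorem submatrix_swap_mul_eq_mul_submatrix_swap {ι κ R : Type*} [Fintype ι] [Fintype κ]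
    [Semiring R] {A M M' : Matrix (ι × κ) (ι × κ) R} (h : A * M = M' * A) :
    A.submatrix Prod.swap id * M
      = M'.submatrix Prod.swap Prod.swap * A.submatrix Prod.swap id := by
  rw [← Matrix.submatrix_mul _ _ _ _ _ Prod.swap_bijective, ← h,
    Matrix.submatrix_mul _ _ _ id _ Function.bijective_id, Matrix.submatrix_id_id]

end Kronecker

section WeightedShift

variable {R : Type*} {n : ℕ}

/-- The backward weighted shift `e_j ↦ w j • e_{j-1}` on `Rⁿ`, with `e_0 ↦ 0`. -/
def weightedShift [Zero R] (n : ℕ) (w : ℕ → R) : Matrix (Fin n) (Fin n) R :=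
  Matrix.of fun i j => if (j : ℕ) = i + 1 then w j else 0

theorem weightedShift_apply [Zero R] (w : ℕ → R) (i j : Fin n) :
    weightedShift n w i j = if (j : ℕ) = i + 1 then w j else 0 :=
  rfl

theorem weightedShift_pow_apply [CommSemiring R] (w : ℕ → R) (m : ℕ) (i j : Fin n) :
    (weightedShift n w ^ m) i j
      = if (j : ℕ) = i + m then ∏ l ∈ range m, w (i + l + 1) else 0 := by
  induction m generalizing j with
  | zero => simp only [pow_zero, Matrix.one_apply, Fin.ext_iff, eq_comm, add_zero, range_zero,
      prod_empty]
  | succ m ih =>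
    simp only [pow_succ, Matrix.mul_apply, ih, weightedShift_apply, ite_mul, zero_mul]
    split_ifs with h
    · have hk : (i : ℕ) + m < n := by omega
      rw [sum_eq_single ⟨i + m, hk⟩ (fun k _ hk => if_neg fun hk' => hk (Fin.ext hk')) (by simp),
        if_pos rfl, if_pos (by simpa only [add_assoc] using h), prod_range_succ, h, add_assoc]
    · refine sum_eq_zero fun k _ => ?_
      split_ifs with hk hj
      · omega
      · exact mul_zero _
      · rfl

theorem weightedShift_pow_self [CommSemiring R] (w : ℕ → R) : weightedShift n w ^ n = 0 := by
  ext i j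
  rw [weightedShift_pow_apply, if_neg (by omega), Matrix.zero_apply]

theorem weightedShift_mul_diagonal [Semiring R] (w d : ℕ → R) :
    weightedShift n w * Matrix.diagonal (fun i : Fin n => d i)
      = weightedShift n fun j => w j * d j := by
  ext i j
  simp only [Matrix.mul_diagonal, weightedShift, Matrix.of_apply, ite_mul, zero_mul]

theorem diagonal_mul_weightedShift [CommSemiring R] {q : R} {w d : ℕ → R}
    (hd : ∀ i, d i = q * d (i + 1)) :
    Matrix.diagonal (fun i : Fin n => d i) * weightedShift n w
      = q • (weightedShift n w * Matrix.diagonal fun i : Fin n => d i) := by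
  ext i j
  simp only [Matrix.diagonal_mul, Matrix.smul_apply, Matrix.mul_diagonal, weightedShift,
    Matrix.of_apply, smul_eq_mul]
  split_ifs with h
  · rw [hd i, h]; ring
  · simp only [mul_zero, zero_mul]

theorem weightedShift_mul_transpose [CommSemiring R] {w w' : ℕ → R} (hw : w n = 0) :
    weightedShift n w * (weightedShift n w')ᵀ
      = Matrix.diagonal fun i : Fin n => w (i + 1) * w' (i + 1) := by
  ext i j
  simp only [Matrix.mul_apply, Matrix.transpose_apply, weightedShift_apply, Matrix.diagonal_apply]
  by_cases hi : (i : ℕ) + 1 < n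
  · rw [sum_eq_single ⟨i + 1, hi⟩
      (fun k _ hk => by rw [if_neg fun hk' => hk (Fin.ext hk'), zero_mul]) (by simp), if_pos rfl]
    simp only [add_left_inj, mul_ite, mul_zero, Fin.ext_iff]
  · have hin : (i : ℕ) + 1 = n := by omega
    rw [hin, hw, zero_mul, ite_self]
    exact sum_eq_zero fun k _ => by rw [if_neg (by omega), zero_mul]

theorem transpose_mul_weightedShift [CommSemiring R] {w w' : ℕ → R} (hw : w 0 = 0) :
    (weightedShift n w')ᵀ * weightedShift n w
      = Matrix.diagonal fun i : Fin n => w i * w' i := by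
  ext i j
  simp only [Matrix.mul_apply, Matrix.transpose_apply, weightedShift_apply, Matrix.diagonal_apply]
  obtain hj | ⟨k, hk⟩ : (j : ℕ) = 0 ∨ ∃ k : ℕ, (j : ℕ) = k + 1 := by
    cases h : (j : ℕ) <;> simp
  · rw [sum_eq_zero fun k _ => by rw [if_neg (c := (j : ℕ) = k + 1) (by omega), mul_zero]]
    split_ifs with hij
    · rw [hij, hj, hw, zero_mul]
    · rfl
  · have hkn : k < n := by omega
    rw [sum_eq_single ⟨k, hkn⟩ (fun l _ hl => by
      rw [if_neg (c := (j : ℕ) = l + 1) (fun h => hl (Fin.ext (by simp; omega))), mul_zero])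
      (by simp), if_pos hk, ← hk]
    simp only [← Fin.ext_iff]
    split_ifs with hij
    · rw [hij, mul_comm]
    · exact zero_mul _

end WeightedShift

section TruncatedSeries

variable {𝕜 S : Type*}

theorem commutator_pow_succ [CommRing 𝕜] [Ring S] [Algebra 𝕜 S] {U X Y Z : S} {κ r : 𝕜}
    (hU : U * Z - Z * U = κ • (X - Y)) (hX : X * Z = r • (Z * X)) (hY : Z * Y = r • (Y * Z))
    (m : ℕ) :
    U * Z ^ (m + 1) - Z ^ (m + 1) * U
      = (κ * ∑ i ∈ range (m + 1), r ^ i) • (Z ^ m * X - Y * Z ^ m) := by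
  have hYpow : ∀ k : ℕ, Z ^ k * Y = r ^ k • (Y * Z ^ k) := fun k => by
    induction k with
    | zero => simp only [pow_zero, one_mul, mul_one, one_smul]
    | succ k ih =>
      rw [pow_succ', mul_assoc, ih, mul_smul_comm, ← mul_assoc, hY, smul_mul_assoc, smul_smul,
        mul_assoc, ← pow_succ]
  induction m with
  | zero => simpa using hU
  | succ m ih =>
    have hXm : Z ^ m * X * Z = r • (Z ^ (m + 1) * X) := by
      rw [mul_assoc, hX, mul_smul_comm, ← mul_assoc, ← pow_succ]
    calc U * Z ^ (m + 1 + 1) - Z ^ (m + 1 + 1) * U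
        = (U * Z ^ (m + 1) - Z ^ (m + 1) * U) * Z + Z ^ (m + 1) * (U * Z - Z * U) := by
          rw [pow_succ Z (m + 1)]; noncomm_ring
      _ = (κ * ∑ i ∈ range (m + 1), r ^ i) • (r • (Z ^ (m + 1) * X) - Y * Z ^ (m + 1))
          + κ • (Z ^ (m + 1) * X - r ^ (m + 1) • (Y * Z ^ (m + 1))) := by
          rw [ih, hU, smul_mul_assoc, sub_mul, hXm, mul_assoc Y, ← pow_succ, mul_smul_comm,
            mul_sub, hYpow]
      _ = (κ * (r * ∑ i ∈ range (m + 1), r ^ i + 1)) • (Z ^ (m + 1) * X)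
          - (κ * (∑ i ∈ range (m + 1), r ^ i + r ^ (m + 1))) • (Y * Z ^ (m + 1)) := by
          module
      _ = (κ * ∑ i ∈ range (m + 1 + 1), r ^ i) • (Z ^ (m + 1) * X - Y * Z ^ (m + 1)) := by
          rw [← geom_sum_succ, ← sum_range_succ, smul_sub]

/-- The polynomial `∑ c_m Z^m` of degree `N`; for the coefficients `quasiRCoeff` it is the
truncation at `Z^(N+1) = 0` of a `q`-exponential of `Z`. -/
def truncatedSeries [CommRing 𝕜] [Ring S] [Algebra 𝕜 S] (c : ℕ → 𝕜) (N : ℕ) (Z : S) : S :=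
  ∑ m ∈ range (N + 1), c m • Z ^ m

theorem map_truncatedSeries {T : Type*} [CommRing 𝕜] [Ring S] [Algebra 𝕜 S] [Ring T]
    [Algebra 𝕜 T] (f : S →ₐ[𝕜] T) (c : ℕ → 𝕜) (N : ℕ) (Z : S) :
    f (truncatedSeries c N Z) = truncatedSeries c N (f Z) := by
  simp only [truncatedSeries, map_sum, map_smul, map_pow]

theorem truncatedSeries_intertwines [CommRing 𝕜] [Ring S] [Algebra 𝕜 S] {U X Y Z : S} {κ r : 𝕜}
    {c : ℕ → 𝕜} {N : ℕ} (hU : U * Z - Z * U = κ • (X - Y)) (hX : X * Z = r • (Z * X))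
    (hY : Z * Y = r • (Y * Z)) (hc : ∀ m < N, κ * (∑ i ∈ range (m + 1), r ^ i) * c (m + 1) = c m)
    (hXN : Z ^ N * X = 0) (hYN : Y * Z ^ N = 0) :
    truncatedSeries c N Z * (X + U) = (U + Y) * truncatedSeries c N Z := by
  have telescope : U * truncatedSeries c N Z - truncatedSeries c N Z * U
      = truncatedSeries c N Z * X - Y * truncatedSeries c N Z := by
    simp only [truncatedSeries, mul_sum, sum_mul, mul_smul_comm, smul_mul_assoc,
      ← sum_sub_distrib, ← smul_sub]
    rw [sum_range_succ', sum_range_succ _ N, hXN, hYN]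
    simp only [pow_zero, mul_one, one_mul, sub_self, smul_zero, add_zero]
    refine sum_congr rfl fun m hm => ?_
    rw [commutator_pow_succ hU hX hY, smul_smul, mul_comm, hc m (mem_range.mp hm)]
  linear_combination (norm := noncomm_ring) -telescope

/-- The coefficients `(q - q⁻¹)^(2m) q^(m(m-1)/2) / ∏_{1 ≤ j ≤ m} (q^j - q^(-j))` of the
quasi-`R`-matrix of quantum `sl₂`. -/
def quasiRCoeff [Field 𝕜] (q : 𝕜) (m : ℕ) : 𝕜 :=
  ∏ j ∈ range m, (q - q⁻¹) ^ 2 * q ^ j / (q ^ (j + 1) - q⁻¹ ^ (j + 1))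

theorem quasiRCoeff_succ [Field 𝕜] {q : 𝕜} (hq : q ≠ 0) {m : ℕ}
    (hm : q ^ (m + 1) ≠ q⁻¹ ^ (m + 1)) :
    (q - q⁻¹)⁻¹ * (∑ i ∈ range (m + 1), (q⁻¹ ^ 2) ^ i) * quasiRCoeff q (m + 1)
      = quasiRCoeff q m := by
  have hq1 : q - q⁻¹ ≠ 0 := fun h => hm (by rw [← sub_eq_zero.mp h])
  have hqq : q * q⁻¹ = 1 := mul_inv_cancel₀ hq
  have hqm : q ^ m * q⁻¹ ^ m = 1 := by rw [← mul_pow, hqq, one_pow]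
  have hD : q ^ (m + 1) - q⁻¹ ^ (m + 1) ≠ 0 := sub_ne_zero.mpr hm
  rw [quasiRCoeff, prod_range_succ, ← quasiRCoeff]
  generalize q⁻¹ = p at *
  have geom : (q - p) * ∑ i ∈ range (m + 1), (p ^ 2) ^ i
      = p ^ m * (q ^ (m + 1) - p ^ (m + 1)) := by
    linear_combination (-q) * mul_geom_sum (p ^ 2) (m + 1)
      + (p * ∑ i ∈ range (m + 1), (p ^ 2) ^ i - p ^ (2 * m + 1)) * hqq - q * hqm
  field_simp
  linear_combination quasiRCoeff q m * (q ^ m * geom + (q ^ (m + 1) - p ^ (m + 1)) * hqm)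

end TruncatedSeries

section QuantumSl2

variable {𝕜 : Type*} [Field 𝕜]

/-- The defining relations of quantum `sl₂` in the convention
`K E = q E K`, `K F = q⁻¹ F K`, `[E, F] = (K² - K⁻²) / (q - q⁻¹)`; `K'` stands for `K⁻¹`. -/
structure QuantumSl2Relations {A : Type*} [Ring A] [Algebra 𝕜 A] (q : 𝕜) (E F K K' : A) :
    Prop where
  mul_inv : K * K' = 1
  inv_mul : K' * K = 1
  K_mul_E : K * E = q • (E * K)
  K_mul_F : K * F = q⁻¹ • (F * K)
  commutator : E * F - F * E = (q - q⁻¹)⁻¹ • (K ^ 2 - K' ^ 2)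

namespace QuantumSl2Relations

section Algebra

variable {A : Type*} [Ring A] [Algebra 𝕜 A] {q : 𝕜} {E F K K' : A}

theorem inv_mul_E (h : QuantumSl2Relations q E F K K') (hq : q ≠ 0) :
    K' * E = q⁻¹ • (E * K') := by
  calc K' * E = q⁻¹ • (K' * (q • (E * K)) * K') := by
        rw [mul_smul_comm, smul_mul_assoc, inv_smul_smul₀ hq, mul_assoc, mul_assoc, h.mul_inv,
          mul_one]
    _ = q⁻¹ • (E * K') := by rw [← h.K_mul_E, ← mul_assoc, h.inv_mul, one_mul]

theorem inv_mul_F (h : QuantumSl2Relations q E F K K') (hq : q ≠ 0) :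
    K' * F = q • (F * K') := by
  calc K' * F = q • (K' * (q⁻¹ • (F * K)) * K') := by
        rw [mul_smul_comm, smul_mul_assoc, smul_inv_smul₀ hq, mul_assoc, mul_assoc, h.mul_inv,
          mul_one]
    _ = q • (F * K') := by rw [← h.K_mul_F, ← mul_assoc, h.inv_mul, one_mul]

theorem chevalleyInvolution (h : QuantumSl2Relations q E F K K') (hq : q ≠ 0) :
    QuantumSl2Relations q F E K' K where
  mul_inv := h.inv_mul
  inv_mul := h.mul_inv
  K_mul_E := h.inv_mul_F hq
  K_mul_F := h.inv_mul_E hq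
  commutator := by rw [← neg_sub, h.commutator, ← smul_neg, neg_sub]

theorem inv_mul_E_mul_K (h : QuantumSl2Relations q E F K K') (hq : q ≠ 0) :
    K' * (E * K) = q⁻¹ • E := by
  rw [← mul_assoc, h.inv_mul_E hq, smul_mul_assoc, mul_assoc, h.inv_mul, mul_one]

theorem inv_mul_F_mul_K (h : QuantumSl2Relations q E F K K') (hq : q ≠ 0) :
    K' * F * K = q • F := by
  rw [h.inv_mul_F hq, smul_mul_assoc, mul_assoc, h.inv_mul, mul_one]

theorem E_mul_K_mul_E (h : QuantumSl2Relations q E F K K') :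
    E * K * E = q • (E * (E * K)) := by
  rw [mul_assoc, h.K_mul_E, mul_smul_comm]

theorem E_mul_inv_mul_F (h : QuantumSl2Relations q E F K K') (hq : q ≠ 0) :
    E * (K' * F) = q • (K' * (E * F)) := by
  rw [← mul_assoc K', h.inv_mul_E hq, smul_mul_assoc, smul_inv_smul₀ hq, mul_assoc]

theorem inv_mul_F_mul_inv_pow (h : QuantumSl2Relations q E F K K') (hq : q ≠ 0) (k : ℕ) :
    K' * F * K' ^ k = q⁻¹ ^ k • (K' ^ k * (K' * F)) := by
  induction k with
  | zero => simp only [pow_zero, mul_one, one_mul, one_smul]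
  | succ k ih =>
    have hF : K' * F * K' = q⁻¹ • (K' * (K' * F)) := by
      rw [h.inv_mul_F hq, mul_smul_comm, inv_smul_smul₀ hq, ← mul_assoc, h.inv_mul_F hq]
    rw [pow_succ, ← mul_assoc, ih, smul_mul_assoc, mul_assoc, hF, mul_smul_comm, smul_smul,
      ← pow_succ, ← mul_assoc]

theorem pow_mul_E_eq_zero (h : QuantumSl2Relations q E F K K') {N : ℕ}
    (hN : (E * K) ^ (N + 1) = 0) : (E * K) ^ N * E = 0 := by
  calc (E * K) ^ N * E = (E * K) ^ (N + 1) * K' := by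
        rw [pow_succ, mul_assoc, mul_assoc E, h.mul_inv, mul_one]
    _ = 0 := by rw [hN, zero_mul]

theorem E_mul_pow_eq_zero (h : QuantumSl2Relations q E F K K') (hq : q ≠ 0) {N : ℕ}
    (hN : (E * K) ^ (N + 1) = 0) : E * (E * K) ^ N = 0 := by
  calc E * (E * K) ^ N = q • (K' * (E * K) ^ (N + 1)) := by
        rw [pow_succ', ← mul_assoc, h.inv_mul_E_mul_K hq, smul_mul_assoc, smul_inv_smul₀ hq]
    _ = 0 := by rw [hN, mul_zero, smul_zero]

end Algebra

end QuantumSl2Relations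

section QuasiRMatrix

variable {ι κ : Type*} [Fintype ι] [DecidableEq ι] [Fintype κ] [DecidableEq κ] {q : 𝕜}
  {E₁ F₁ K₁ K₁' : Matrix ι ι 𝕜} {E₂ F₂ K₂ K₂' : Matrix κ κ 𝕜}

/-- The truncation `∑_{m ≤ N} c_m (EK ⊗ K⁻¹F)^m` of the quasi-`R`-matrix of quantum `sl₂`, for the
coefficients `c_m` of `quasiRCoeff`. -/
def quasiRMatrix (q : 𝕜) (N : ℕ) (E₁ K₁ : Matrix ι ι 𝕜) (F₂ K₂' : Matrix κ κ 𝕜) :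
    Matrix (ι × κ) (ι × κ) 𝕜 :=
  truncatedSeries (quasiRCoeff q) N ((E₁ * K₁) ⊗ₖ (K₂' * F₂))

theorem quasiRMatrix_intertwines_E (h₁ : QuantumSl2Relations q E₁ F₁ K₁ K₁')
    (h₂ : QuantumSl2Relations q E₂ F₂ K₂ K₂') (hq : q ≠ 0) {N : ℕ}
    (hqN : ∀ m < N, q ^ (m + 1) ≠ q⁻¹ ^ (m + 1)) (hN : (E₁ * K₁) ^ (N + 1) = 0) :
    quasiRMatrix q N E₁ K₁ F₂ K₂' * (E₁ ⊗ₖ K₂ + K₁' ⊗ₖ E₂)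
      = (K₁' ⊗ₖ E₂ + E₁ ⊗ₖ (K₂' ^ 3)) * quasiRMatrix q N E₁ K₁ F₂ K₂' := by
  refine truncatedSeries_intertwines (κ := (q - q⁻¹)⁻¹) (r := q⁻¹ ^ 2) ?_ ?_ ?_
    (fun m hm => quasiRCoeff_succ hq (hqN m hm)) ?_ ?_
  · have hEF : K₂' * (E₂ * F₂) - K₂' * F₂ * E₂ = (q - q⁻¹)⁻¹ • (K₂ - K₂' ^ 3) := by
      rw [mul_assoc, ← mul_sub, h₂.commutator, mul_smul_comm, mul_sub, pow_two K₂, ← mul_assoc,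
        h₂.inv_mul, one_mul, ← pow_succ']
    calc K₁' ⊗ₖ E₂ * (E₁ * K₁) ⊗ₖ (K₂' * F₂) - (E₁ * K₁) ⊗ₖ (K₂' * F₂) * K₁' ⊗ₖ E₂
        = E₁ ⊗ₖ (K₂' * (E₂ * F₂)) - E₁ ⊗ₖ (K₂' * F₂ * E₂) := by
          rw [← Matrix.mul_kronecker_mul, ← Matrix.mul_kronecker_mul, h₁.inv_mul_E_mul_K hq,
            h₂.E_mul_inv_mul_F hq, Matrix.smul_kronecker, Matrix.kronecker_smul,
            inv_smul_smul₀ hq, mul_assoc E₁, h₁.mul_inv, mul_one]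
      _ = E₁ ⊗ₖ ((q - q⁻¹)⁻¹ • (K₂ - K₂' ^ 3)) := by
          rw [← hEF, kronecker_sub]
      _ = (q - q⁻¹)⁻¹ • (E₁ ⊗ₖ K₂ - E₁ ⊗ₖ (K₂' ^ 3)) := by
          rw [Matrix.kronecker_smul, kronecker_sub]
  · rw [← Matrix.mul_kronecker_mul, ← Matrix.mul_kronecker_mul, h₁.E_mul_K_mul_E,
      h₂.inv_mul_F_mul_K hq, Matrix.smul_kronecker, Matrix.kronecker_smul, smul_smul, smul_smul,
      ← mul_assoc K₂, h₂.mul_inv, one_mul, mul_assoc, ← sq, ← mul_pow, inv_mul_cancel₀ hq,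
      one_pow, one_smul]
  · rw [← Matrix.mul_kronecker_mul, ← Matrix.mul_kronecker_mul, h₁.E_mul_K_mul_E,
      h₂.inv_mul_F_mul_inv_pow hq, Matrix.smul_kronecker, Matrix.kronecker_smul, smul_smul,
      pow_succ', mul_inv_cancel_left₀ hq]
  · rw [kronecker_pow, ← Matrix.mul_kronecker_mul, h₁.pow_mul_E_eq_zero hN, Matrix.zero_kronecker]
  · rw [kronecker_pow, ← Matrix.mul_kronecker_mul, h₁.E_mul_pow_eq_zero hq hN,
      Matrix.zero_kronecker]

theorem quasiRMatrix_commute_K (h₁ : QuantumSl2Relations q E₁ F₁ K₁ K₁')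
    (h₂ : QuantumSl2Relations q E₂ F₂ K₂ K₂') (hq : q ≠ 0) (N : ℕ) :
    Commute (quasiRMatrix q N E₁ K₁ F₂ K₂') (K₁ ⊗ₖ K₂) := by
  have hZ : Commute ((E₁ * K₁) ⊗ₖ (K₂' * F₂)) (K₁ ⊗ₖ K₂) := by
    rw [commute_iff_eq, ← Matrix.mul_kronecker_mul, ← Matrix.mul_kronecker_mul,
      ← mul_assoc K₁, h₁.K_mul_E, h₂.inv_mul_F_mul_K hq, ← mul_assoc K₂, h₂.mul_inv, one_mul,
      Matrix.kronecker_smul, smul_mul_assoc, Matrix.smul_kronecker]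
  rw [quasiRMatrix, truncatedSeries]
  exact Commute.sum_left _ _ _ fun m _ => (hZ.pow_left m).smul_left (quasiRCoeff q m)

theorem quasiRMatrix_submatrix_swap (h₁ : QuantumSl2Relations q E₁ F₁ K₁ K₁')
    (h₂ : QuantumSl2Relations q E₂ F₂ K₂ K₂') (hq : q ≠ 0) (N : ℕ) :
    (quasiRMatrix q N F₂ K₂' E₁ K₁).submatrix Prod.swap Prod.swap
      = quasiRMatrix q N E₁ K₁ F₂ K₂' := by
  have hZ : (F₂ * K₂') ⊗ₖ (K₁ * E₁) = (K₂' * F₂) ⊗ₖ (E₁ * K₁) := by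
    rw [h₁.K_mul_E, h₂.inv_mul_F hq, Matrix.smul_kronecker, Matrix.kronecker_smul]
  rw [quasiRMatrix, hZ]
  refine (map_truncatedSeries
    (Matrix.reindexAlgEquiv 𝕜 𝕜 (Equiv.prodComm κ ι)).toAlgHom _ N _).trans ?_
  exact congrArg (truncatedSeries (quasiRCoeff q) N) (Matrix.ext fun _ _ => mul_comm _ _)

theorem quasiRMatrix_intertwines_F (h₁ : QuantumSl2Relations q E₁ F₁ K₁ K₁')
    (h₂ : QuantumSl2Relations q E₂ F₂ K₂ K₂') (hq : q ≠ 0) {N : ℕ}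
    (hqN : ∀ m < N, q ^ (m + 1) ≠ q⁻¹ ^ (m + 1)) (hN : (K₂' * F₂) ^ (N + 1) = 0) :
    quasiRMatrix q N E₁ K₁ F₂ K₂' * (F₁ ⊗ₖ K₂ + K₁' ⊗ₖ F₂)
      = (F₁ ⊗ₖ K₂ + (K₁ ^ 3) ⊗ₖ F₂) * quasiRMatrix q N E₁ K₁ F₂ K₂' := by
  have hN' : (F₂ * K₂') ^ (N + 1) = 0 := by
    rwa [h₂.inv_mul_F hq, smul_pow, smul_eq_zero_iff_right (pow_ne_zero _ hq)] at hN
  have hE := congrArg (fun M => M.submatrix Prod.swap Prod.swap)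
    (quasiRMatrix_intertwines_E (h₂.chevalleyInvolution hq) (h₁.chevalleyInvolution hq) hq hqN hN')
  simp only [Matrix.submatrix_mul _ _ Prod.swap Prod.swap Prod.swap Prod.swap_bijective,
    Matrix.submatrix_add, Pi.add_apply,
    quasiRMatrix_submatrix_swap h₁ h₂ hq, kronecker_submatrix_swap] at hE
  rwa [add_comm (F₁ ⊗ₖ K₂)]

end QuasiRMatrix

end QuantumSl2

section RootOfUnity

theorem xic_add (n : ℕ) (x y : ℂ) : xic n (x + y) = xic n x * xic n y := by
  rw [xic, xic, xic, ← Complex.exp_add, mul_add, add_div]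

theorem xic_neg (n : ℕ) (x : ℂ) : xic n (-x) = (xic n x)⁻¹ := by
  rw [xic, xic, ← Complex.exp_neg, mul_neg, neg_div]

theorem xic_ne_zero (n : ℕ) (x : ℂ) : xic n x ≠ 0 :=
  Complex.exp_ne_zero _

theorem xic_pow (n : ℕ) (x : ℂ) (m : ℕ) : xic n x ^ m = xic n (m * x) := by
  rw [xic, xic, ← Complex.exp_nat_mul]
  congr 1
  ring

theorem xic_one_pow_sub_inv_pow (n m : ℕ) : xic n 1 ^ m - (xic n 1)⁻¹ ^ m = qn n m := by
  rw [← xic_neg, xic_pow, xic_pow, mul_neg, mul_one, qn]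

theorem qn_zero (n : ℕ) : qn n 0 = 0 := by
  rw [qn, neg_zero, sub_self]

theorem qn_natCast_eq_zero_iff {n j : ℕ} (hn : n ≠ 0) : qn n j = 0 ↔ n ∣ j := by
  have hn' : (n : ℂ) ≠ 0 := Nat.cast_ne_zero.mpr hn
  have hpi : (π : ℂ) ≠ 0 := ofReal_ne_zero.mpr Real.pi_ne_zero
  rw [qn, sub_eq_zero, xic, xic, Complex.exp_eq_exp_iff_exists_int, ← Int.natCast_dvd_natCast,
    dvd_def]
  refine exists_congr fun t => ?_
  rw [← Int.cast_inj (α := ℂ)]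
  push_cast
  constructor
  · intro h
    field_simp at h
    linear_combination h / 2
  · intro h
    rw [h]
    field_simp
    ring

theorem qn_natCast_ne_zero {n j : ℕ} (hj : 0 < j) (hjn : j < n) : qn n j ≠ 0 :=
  (qn_natCast_eq_zero_iff (hj.trans hjn).ne').not.mpr (Nat.not_dvd_of_pos_of_lt hj hjn)

theorem xic_one_pow_ne_inv_pow {n j : ℕ} (hj : 0 < j) (hjn : j < n) :
    xic n 1 ^ j ≠ (xic n 1)⁻¹ ^ j := by
  rw [← sub_ne_zero, xic_one_pow_sub_inv_pow]
  exact qn_natCast_ne_zero hj hjn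

theorem qn_one_ne_zero {n : ℕ} (hn : 2 ≤ n) : qn n 1 ≠ 0 := by
  rw [← Nat.cast_one]
  exact qn_natCast_ne_zero one_pos hn

theorem qfac_ne_zero {n m : ℕ} (hm : m < n) : qfac n m ≠ 0 := by
  refine prod_ne_zero_iff.mpr fun j hj => ?_
  rw [← Nat.cast_add_one]
  exact qn_natCast_ne_zero j.succ_pos (lt_of_le_of_lt (mem_range.mp hj) hm)

theorem qn_mul_qn_sub_qn_mul_qn (n : ℕ) (x y z : ℂ) :
    qn n (x + z) * qn n y - qn n x * qn n (y + z) = qn n z * qn n (y - x) := by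
  simp only [qn, sub_eq_add_neg, neg_add, neg_neg, xic_add]
  ring

end RootOfUnity

section Representation

variable (n : ℕ)

theorem Emat_eq_weightedShift : Emat n = weightedShift n fun j => qint n j :=
  rfl

theorem Fmat_eq_transpose_weightedShift (a : ℂ) :
    Fmat n a = (weightedShift n fun i => qint n (2 * a - i + 1))ᵀ := by
  ext i j
  simp only [Fmat, Matrix.of_apply, Matrix.transpose_apply, weightedShift_apply]
  split_ifs with h
  · rw [h]; push_cast; ring_nf
  · rfl

theorem Kmat_eq_diagonal (a : ℂ) :
    Kmat n a = Matrix.diagonal fun i : Fin n => xic n (a - (i : ℕ)) :=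
  rfl

theorem Kinvmat_eq_diagonal (a : ℂ) :
    Kinvmat n a = Matrix.diagonal fun i : Fin n => xic n (-(a - (i : ℕ))) :=
  rfl

theorem Kmat_mul_Kinvmat (a : ℂ) : Kmat n a * Kinvmat n a = 1 := by
  simp only [Kmat_eq_diagonal, Kinvmat_eq_diagonal, Matrix.diagonal_mul_diagonal, xic_neg,
    mul_inv_cancel₀ (xic_ne_zero _ _), Matrix.diagonal_one]

theorem Emat_mul_Kmat (a : ℂ) :
    Emat n * Kmat n a = weightedShift n fun j => qint n j * xic n (a - j) := by
  rw [Emat_eq_weightedShift, Kmat_eq_diagonal, weightedShift_mul_diagonal _ fun j => xic n (a - j)]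

theorem Kinvmat_mul_Fmat (a : ℂ) :
    Kinvmat n a * Fmat n a
      = (weightedShift n fun i => qint n (2 * a - i + 1) * xic n (-(a - i)))ᵀ := by
  rw [Fmat_eq_transpose_weightedShift, Kinvmat_eq_diagonal, ← weightedShift_mul_diagonal _
    fun i => xic n (-(a - i)), Matrix.transpose_mul, Matrix.diagonal_transpose]

theorem Emat_mul_Kmat_pow_eq_zero (a : ℂ) : (Emat n * Kmat n a) ^ n = 0 := by
  rw [Emat_mul_Kmat, weightedShift_pow_self]

theorem Kinvmat_mul_Fmat_pow_eq_zero (a : ℂ) : (Kinvmat n a * Fmat n a) ^ n = 0 := by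
  rw [Kinvmat_mul_Fmat, ← Matrix.transpose_pow, weightedShift_pow_self, Matrix.transpose_zero]

variable {n}

theorem Emat_mul_Fmat_sub_Fmat_mul_Emat (hn : 2 ≤ n) (a : ℂ) :
    Emat n * Fmat n a - Fmat n a * Emat n
      = (xic n 1 - (xic n 1)⁻¹)⁻¹ • (Kmat n a ^ 2 - Kinvmat n a ^ 2) := by
  have h0 : qint n (0 : ℕ) = 0 := by rw [qint, Nat.cast_zero, qn_zero, zero_div]
  have hn0 : qint n n = 0 := by
    rw [qint, (qn_natCast_eq_zero_iff (by omega)).mpr dvd_rfl, zero_div]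
  have h1 := qn_one_ne_zero hn
  rw [Fmat_eq_transpose_weightedShift, Emat_eq_weightedShift,
    weightedShift_mul_transpose (w := fun j => qint n j) hn0,
    transpose_mul_weightedShift (w := fun j => qint n j) h0, Kmat_eq_diagonal, Kinvmat_eq_diagonal,
    Matrix.diagonal_pow, Matrix.diagonal_pow, Matrix.diagonal_sub, Matrix.diagonal_sub,
    ← Matrix.diagonal_smul]
  congr 1
  funext i
  have hcomm := qn_mul_qn_sub_qn_mul_qn n i (2 * a - i) 1
  have hweight : xic n (a - (i : ℕ)) ^ 2 - xic n (-(a - (i : ℕ))) ^ 2 = qn n (2 * a - i - i) := by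
    simp only [qn, xic_pow]; push_cast; ring_nf
  have hone : xic n 1 - (xic n 1)⁻¹ = qn n 1 := by rw [qn, xic_neg]
  simp only [Pi.smul_apply, Pi.pow_apply, smul_eq_mul, hweight, hone, qint]
  push_cast
  rw [sub_add_eq_sub_sub, sub_add_cancel]
  field_simp
  exact hcomm

theorem quantumSl2Relations (hn : 2 ≤ n) (a : ℂ) :
    QuantumSl2Relations (xic n 1) (Emat n) (Fmat n a) (Kmat n a) (Kinvmat n a) := by
  have hd (i : ℕ) : xic n (a - i) = xic n 1 * xic n (a - (i + 1 : ℕ)) := by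
    rw [← xic_add]; push_cast; ring_nf
  have hKS (w : ℕ → ℂ) : Kmat n a * weightedShift n w = xic n 1 • (weightedShift n w * Kmat n a) :=
    diagonal_mul_weightedShift (d := fun i => xic n (a - i)) hd
  refine ⟨Kmat_mul_Kinvmat n a, mul_eq_one_comm.mp (Kmat_mul_Kinvmat n a),
    hKS fun j => qint n j, ?_, ?_⟩
  · have hT := congrArg Matrix.transpose (hKS fun i => qint n (2 * a - i + 1))
    rw [Matrix.transpose_smul, Matrix.transpose_mul, Matrix.transpose_mul,
      ← Fmat_eq_transpose_weightedShift, Kmat_eq_diagonal, Matrix.diagonal_transpose] at hT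
    rw [Kmat_eq_diagonal, hT, inv_smul_smul₀ (xic_ne_zero n 1)]
  · exact Emat_mul_Fmat_sub_Fmat_mul_Emat hn a

end Representation

section CartanFactor

variable {n : ℕ} {a b : ℂ} {d d' : ℕ → ℂ}

/-- The Cartan factor `q^(H ⊗ H / 2)` of the `R`-matrix, diagonal in the weight basis. -/
def cartanFactor (n : ℕ) (a b : ℂ) : Matrix (Fin n × Fin n) (Fin n × Fin n) ℂ :=
  Matrix.diagonal fun p => xic n (2 * (a - (p.1 : ℕ)) * (b - (p.2 : ℕ)))

theorem cartanFactor_mul_diagonal_kronecker_weightedShift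
    (hd : ∀ i, d' i = xic n (2 * (a - i)) * d i) (w : ℕ → ℂ) :
    cartanFactor n a b * (Matrix.diagonal fun i : Fin n => d i) ⊗ₖ weightedShift n w
      = (Matrix.diagonal fun i : Fin n => d' i) ⊗ₖ weightedShift n w * cartanFactor n a b := by
  ext ⟨i, j⟩ ⟨k, l⟩
  simp only [cartanFactor, Matrix.diagonal_mul, Matrix.mul_diagonal, Matrix.kronecker_apply,
    Matrix.diagonal_apply, weightedShift_apply]
  split_ifs with hik hjl
  · have hexp : xic n (2 * (a - i) * (b - j))
        = xic n (2 * (a - i)) * xic n (2 * (a - i) * (b - l)) := by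
      rw [← xic_add, hjl]; push_cast; ring_nf
    rw [← hik, hexp, hd]
    ring
  all_goals simp only [mul_zero, zero_mul]

theorem cartanFactor_mul_diagonal_kronecker_transpose
    (hd : ∀ i, d i = xic n (2 * (a - i)) * d' i) (w : ℕ → ℂ) :
    cartanFactor n a b * (Matrix.diagonal fun i : Fin n => d i) ⊗ₖ (weightedShift n w)ᵀ
      = (Matrix.diagonal fun i : Fin n => d' i) ⊗ₖ (weightedShift n w)ᵀ * cartanFactor n a b := by
  have h := congrArg Matrix.transpose
    (cartanFactor_mul_diagonal_kronecker_weightedShift (b := b) hd w)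
  simpa only [Matrix.transpose_mul, ← Matrix.kroneckerMap_transpose, Matrix.diagonal_transpose,
    cartanFactor] using h.symm

theorem cartanFactor_submatrix_swap (n : ℕ) (a b : ℂ) :
    (cartanFactor n a b).submatrix Prod.swap Prod.swap = cartanFactor n b a := by
  rw [cartanFactor, cartanFactor, Matrix.submatrix_diagonal _ _ Prod.swap_injective]
  congr 1
  funext p
  exact congrArg (xic n) (mul_right_comm 2 _ _)

theorem cartanFactor_mul_kronecker_swap {A B A' B' : Matrix (Fin n) (Fin n) ℂ}
    (h : cartanFactor n b a * A ⊗ₖ B = A' ⊗ₖ B' * cartanFactor n b a) :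
    cartanFactor n a b * B ⊗ₖ A = B' ⊗ₖ A' * cartanFactor n a b := by
  have h := congrArg (fun M => M.submatrix Prod.swap Prod.swap) h
  simpa only [Matrix.submatrix_mul _ _ Prod.swap Prod.swap Prod.swap Prod.swap_bijective,
    cartanFactor_submatrix_swap, kronecker_submatrix_swap] using h

theorem cartanFactor_commute_Kmat_kronecker_Kmat (n : ℕ) (a b : ℂ) :
    Commute (cartanFactor n a b) (Kmat n a ⊗ₖ Kmat n b) := by
  rw [Kmat_eq_diagonal, Kmat_eq_diagonal, Matrix.diagonal_kronecker_diagonal]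
  exact Matrix.commute_diagonal _ _

end CartanFactor

section RMatrix

theorem qbin_sub_natCast {n m : ℕ} (hm : m < n) (x : ℂ) :
    qbin n x (x - m) = (∏ j ∈ range m, qn n (x - j)) / qfac n m := by
  have hx : x - (x - (m : ℂ)) = m := sub_sub_cancel x _
  have h : ∃ k : ℕ, k < n ∧ x - (x - (m : ℂ)) = (k : ℂ) := ⟨m, hm, hx⟩
  have hchoose : h.choose = m := Nat.cast_injective (R := ℂ) (h.choose_spec.2.symm.trans hx)
  have hfac : ∏ j ∈ range m, qn n (m - j) = qfac n m := by
    rw [qfac, ← prod_range_reflect]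
    refine prod_congr rfl fun j hj => ?_
    rw [Nat.sub_sub, Nat.cast_sub (by have := mem_range.mp hj; omega)]
    push_cast
    ring_nf
  rw [qbin, dif_pos h, hchoose, hx, prod_div_distrib, hfac]

theorem quasiRCoeff_xic (n m : ℕ) :
    quasiRCoeff (xic n 1) m = qn n 1 ^ (2 * m) * xic n (m * (m - 1) / 2) / qfac n m := by
  induction m with
  | zero => simp only [quasiRCoeff, qfac, xic, range_zero, prod_empty, Nat.cast_zero, mul_zero,
      zero_mul, zero_div, pow_zero, Complex.exp_zero, mul_one, div_one]
  | succ m ih =>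
    have hexp : xic n ((m + 1 : ℕ) * ((m + 1 : ℕ) - 1) / 2)
        = xic n (m * (m - 1) / 2) * xic n 1 ^ m := by
      rw [xic_pow, ← xic_add]; push_cast; ring_nf
    have hone : xic n 1 - (xic n 1)⁻¹ = qn n 1 := by rw [qn, xic_neg]
    rw [quasiRCoeff, prod_range_succ, ← quasiRCoeff, ih, xic_one_pow_sub_inv_pow, hone, hexp,
      qfac, qfac, prod_range_succ, Nat.cast_add_one]
    ring

theorem Emat_mul_Kmat_kronecker_pow_apply {n : ℕ} (a b : ℂ) (m : ℕ) (k h u v : Fin n) :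
    (((Emat n * Kmat n a) ⊗ₖ (Kinvmat n b * Fmat n b)) ^ m) (k, h) (u, v)
      = if (u : ℕ) = k + m ∧ (h : ℕ) = v + m then
          xic n (m * (a - b - u + v + m)) * (∏ j ∈ range m, qn n (u - j)) *
            (∏ j ∈ range m, qn n (2 * b - v - j)) / qn n 1 ^ (2 * m)
        else 0 := by
  rw [kronecker_pow, Matrix.kronecker_apply, Emat_mul_Kmat, Kinvmat_mul_Fmat,
    ← Matrix.transpose_pow, Matrix.transpose_apply, weightedShift_pow_apply,
    weightedShift_pow_apply, ite_zero_mul_ite_zero]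
  split_ifs with huh
  · have hE : ∏ l ∈ range m, qint n (k + l + 1 : ℕ)
        = (∏ j ∈ range m, qn n (u - j)) / qn n 1 ^ m := by
      rw [← prod_range_reflect]
      simp only [qint, prod_div_distrib, prod_const, card_range]
      congr 1
      refine prod_congr rfl fun j hj => congrArg (qn n) ?_
      have hjm : j < m := mem_range.mp hj
      rw [huh.1, ← Nat.cast_sub (by omega)]
      exact congrArg Nat.cast (by omega)
    have hF : ∏ l ∈ range m, qint n (2 * b - (v + l + 1 : ℕ) + 1)
        = (∏ j ∈ range m, qn n (2 * b - v - j)) / qn n 1 ^ m := by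
      simp only [qint, prod_div_distrib, prod_const, card_range]
      congr 1
      refine prod_congr rfl fun j _ => congrArg (qn n) ?_
      push_cast
      ring
    have hK : (∏ l ∈ range m, xic n (a - (k + l + 1 : ℕ)))
        * ∏ l ∈ range m, xic n (-(b - (v + l + 1 : ℕ))) = xic n (m * (a - b - u + v + m)) := by
      rw [← prod_mul_distrib, ← xic_pow, prod_eq_pow_card, card_range]
      intro l _
      rw [← xic_add, huh.1]
      push_cast
      ring_nf
    rw [prod_mul_distrib, prod_mul_distrib, hE, hF, ← hK]
    ring
  · rfl

theorem Rmat_coeff_eq {n m : ℕ} (hn : 2 ≤ n) (a b u v : ℂ) (hm : m < n) :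
    qfac n m * xic n (2 * (a - u) * (b - v) - m * (a - b - u + v) - m * (m + 1) / 2) *
        qbin n u (u - m) * qbin n (2 * b - v) (2 * b - v - m)
      = xic n (2 * (a - (u - m)) * (b - (v + m))) *
        (quasiRCoeff (xic n 1) m *
          (xic n (m * (a - b - u + v + m)) * (∏ j ∈ range m, qn n (u - j)) *
            (∏ j ∈ range m, qn n (2 * b - v - j)) / qn n 1 ^ (2 * m))) := by
  have hexp : xic n (2 * (a - u) * (b - v) - m * (a - b - u + v) - m * (m + 1) / 2)
      = xic n (2 * (a - (u - m)) * (b - (v + m))) * xic n (m * (m - 1) / 2)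
        * xic n (m * (a - b - u + v + m)) := by
    rw [← xic_add, ← xic_add]
    ring_nf
  have hfac := qfac_ne_zero hm
  have hone := qn_one_ne_zero hn
  rw [qbin_sub_natCast hm, qbin_sub_natCast hm, quasiRCoeff_xic, hexp]
  field_simp

theorem Rmat_eq_submatrix_swap {N : ℕ} (hn : 2 ≤ N + 1) (a b : ℂ) :
    Rmat (N + 1) a b
      = (cartanFactor (N + 1) a b * quasiRMatrix (xic (N + 1) 1) N (Emat (N + 1)) (Kmat (N + 1) a)
          (Fmat (N + 1) b) (Kinvmat (N + 1) b)).submatrix Prod.swap id := by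
  ext ⟨h, k⟩ ⟨u, v⟩
  rw [Matrix.submatrix_apply, cartanFactor, Matrix.diagonal_mul, quasiRMatrix, truncatedSeries,
    Matrix.sum_apply]
  simp only [Matrix.smul_apply, Prod.swap_prod_mk, id_eq, Emat_mul_Kmat_kronecker_pow_apply,
    Rmat, Matrix.of_apply, smul_eq_mul, mul_ite, mul_zero]
  split_ifs with hw
  · obtain ⟨m, hm⟩ := Nat.exists_eq_add_of_le hw.2
    have hu : (u : ℕ) = k + m := by omega
    have hk : (k : ℂ) = u - m := by rw [hu]; push_cast; ring
    have hmN : m ∈ range (N + 1) := mem_range.mpr (by omega)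
    rw [sum_eq_single_of_mem m hmN fun l _ hl => if_neg (by omega), if_pos ⟨hu, hm⟩, hm,
      Nat.add_sub_cancel_left, Rmat_coeff_eq hn a b u v (by omega), hk, Nat.cast_add]
  · rw [sum_eq_zero fun m _ => if_neg (by omega), mul_zero]

end RMatrix

section Intertwining

theorem cartanFactor_intertwines_E (n : ℕ) (a b : ℂ) :
    cartanFactor n a b * (Kinvmat n a ⊗ₖ Emat n + Emat n ⊗ₖ (Kinvmat n b ^ 3))
      = (Kmat n a ⊗ₖ Emat n + Emat n ⊗ₖ Kinvmat n b) * cartanFactor n a b := by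
  have hcube : Kinvmat n b ^ 3 = Matrix.diagonal fun i : Fin n => xic n (-(b - (i : ℕ))) ^ 3 :=
    Matrix.diagonal_pow _ 3
  rw [mul_add, add_mul, hcube]
  congr 1
  · refine cartanFactor_mul_diagonal_kronecker_weightedShift (d := fun i => xic n (-(a - i)))
      (d' := fun i => xic n (a - i)) (fun i => ?_) fun j => qint n j
    rw [← xic_add]; ring_nf
  · refine cartanFactor_mul_kronecker_swap (cartanFactor_mul_diagonal_kronecker_weightedShift
      (d := fun i => xic n (-(b - i)) ^ 3) (d' := fun i => xic n (-(b - i))) (fun i => ?_)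
      fun j => qint n j)
    rw [xic_pow, ← xic_add]; push_cast; ring_nf

theorem cartanFactor_intertwines_F (n : ℕ) (a b : ℂ) :
    cartanFactor n a b * (Fmat n a ⊗ₖ Kmat n b + (Kmat n a ^ 3) ⊗ₖ Fmat n b)
      = (Fmat n a ⊗ₖ Kinvmat n b + Kmat n a ⊗ₖ Fmat n b) * cartanFactor n a b := by
  have hcube : Kmat n a ^ 3 = Matrix.diagonal fun i : Fin n => xic n (a - (i : ℕ)) ^ 3 :=
    Matrix.diagonal_pow _ 3
  rw [mul_add, add_mul, hcube, Fmat_eq_transpose_weightedShift, Fmat_eq_transpose_weightedShift]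
  congr 1
  · refine cartanFactor_mul_kronecker_swap (cartanFactor_mul_diagonal_kronecker_transpose
      (d := fun i => xic n (b - i)) (d' := fun i => xic n (-(b - i))) (fun i => ?_) _)
    rw [← xic_add]; ring_nf
  · refine cartanFactor_mul_diagonal_kronecker_transpose (d := fun i => xic n (a - i) ^ 3)
      (d' := fun i => xic n (a - i)) (fun i => ?_) _
    rw [xic_pow, ← xic_add]; push_cast; ring_nf

theorem Rmat_intertwines_coproduct_general (n : ℕ) (hn : 2 ≤ n) (a b : ℂ) :
    (Rmat n a b * (Emat n ⊗ₖ Kmat n b + Kinvmat n a ⊗ₖ Emat n)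
        = (Emat n ⊗ₖ Kmat n a + Kinvmat n b ⊗ₖ Emat n) * Rmat n a b) ∧
    (Rmat n a b * (Fmat n a ⊗ₖ Kmat n b + Kinvmat n a ⊗ₖ Fmat n b)
        = (Fmat n b ⊗ₖ Kmat n a + Kinvmat n b ⊗ₖ Fmat n a) * Rmat n a b) ∧
    (Rmat n a b * (Kmat n a ⊗ₖ Kmat n b) = (Kmat n b ⊗ₖ Kmat n a) * Rmat n a b) := by
  obtain ⟨N, rfl⟩ : ∃ N, n = N + 1 := ⟨n - 1, by omega⟩
  have ha := quantumSl2Relations hn a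
  have hb := quantumSl2Relations hn b
  have hq := xic_ne_zero (N + 1) 1
  have hqN (m : ℕ) (hm : m < N) := xic_one_pow_ne_inv_pow m.succ_pos (Nat.succ_lt_succ hm)
  have hE := SemiconjBy.mul_left (cartanFactor_intertwines_E (N + 1) a b)
    (quasiRMatrix_intertwines_E ha hb hq hqN (Emat_mul_Kmat_pow_eq_zero _ a))
  have hF := SemiconjBy.mul_left (cartanFactor_intertwines_F (N + 1) a b)
    (quasiRMatrix_intertwines_F ha hb hq hqN (Kinvmat_mul_Fmat_pow_eq_zero _ b))
  have hK := (cartanFactor_commute_Kmat_kronecker_Kmat (N + 1) a b).mul_left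
    (quasiRMatrix_commute_K ha hb hq N)
  rw [Rmat_eq_submatrix_swap hn, add_comm (Fmat _ b ⊗ₖ Kmat _ a)]
  refine ⟨?_, ?_, ?_⟩
  · simpa only [Matrix.submatrix_add, Pi.add_apply, kronecker_submatrix_swap] using
      submatrix_swap_mul_eq_mul_submatrix_swap hE
  · simpa only [Matrix.submatrix_add, Pi.add_apply, kronecker_submatrix_swap] using
      submatrix_swap_mul_eq_mul_submatrix_swap hF
  · simpa only [kronecker_submatrix_swap] using submatrix_swap_mul_eq_mul_submatrix_swap hK

end Intertwining

theorem Rmat_intertwines_coproduct (n : ℕ) (hn : 2 ≤ n) (a b : ℂ)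
    (ha : NotHalfInt a) (hb : NotHalfInt b) :
    (Rmat n a b * (Emat n ⊗ₖ Kmat n b + Kinvmat n a ⊗ₖ Emat n)
        = (Emat n ⊗ₖ Kmat n a + Kinvmat n b ⊗ₖ Emat n) * Rmat n a b) ∧
    (Rmat n a b * (Fmat n a ⊗ₖ Kmat n b + Kinvmat n a ⊗ₖ Fmat n b)
        = (Fmat n b ⊗ₖ Kmat n a + Kinvmat n b ⊗ₖ Fmat n a) * Rmat n a b) ∧
    (Rmat n a b * (Kmat n a ⊗ₖ Kmat n b) = (Kmat n b ⊗ₖ Kmat n a) * Rmat n a b) :=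
  Rmat_intertwines_coproduct_general n hn a b

end
end
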